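/- Let A be a linear relation in a complex vector space H, and let {λ_1, …, λ_l} and {μ_1, …, μ_m} be two disjoint finite subsets of ℂ ∪ {∞}. Then R_c(A) = (Σ_{i=1}^{l} R_{λ_i}(A)) ∩ (Σ_{j=1}^{m} R_{μ_j}(A)), where the sums are sums of linear subspaces of H. -/

import Mathlib

/-!
Think of `A` as a vector space `E = A` with its two coordinate maps `a, b : E → H`. A vector `x`
lies in the root space at `ν` exactly when `x = (b - t a) e` for some `E`-valued rational function
`e` in `t` whose only pole (on the projective line) is at `ν`. Clearing denominators, `x` lies in a
sum of root spaces at points of a set `S` only if `(b - t a) e = p x`, where `e` is a polynomial,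
`p` is a polynomial whose zeros lie in `S`, and the drop in degree of `p` (its zero at infinity) is
controlled: `deg p ≤ n` and `deg e < n`, with `deg p = n` unless `∞ ∈ S`. This is the predicate
`LinRel.Divides A n p x`; `mem_rootSpace_iff` and `mem_rootInf_iff` express the root spaces at
`λ` and at `∞` by `p = (t - λ) ^ n` and by `p = 1`.

For fixed `x` and `n` the set of such `p` is a vector space, and it is compatible with
multiplication by polynomials. So if `x` lies in both sums, there are admissible `p`, `q` of formal
degrees `n`, `m` without a common zero on the projective line. The homogeneous Bézout identity
makes every `r` of degree at most `n + m` admissible (`divides_of_coprime`), in particular `1` and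
all `(t - ν) ^ (n + m)`, so `x` is in the root space at every point. Since `0` and `∞` are
distinct, the same argument shows that `R_c(A)` lies in every root space, which is the other
inclusion.
-/

open Submodule Set

variable {H : Type*} [AddCommGroup H] [Module ℂ H]

/-- A linear relation in `H`: a linear subspace of the product `H × H`. -/
abbrev LinRel (H : Type*) [AddCommGroup H] [Module ℂ H] : Type _ := Submodule ℂ (H × H)

namespace LinRel

/-- The relation `A - λ = {(x, y - λ x) : (x,y) ∈ A}`. -/
def shift (A : LinRel H) (lam : ℂ) : LinRel H :=
  A.map ((LinearMap.fst ℂ H H).prod (LinearMap.snd ℂ H H - lam • LinearMap.fst ℂ H H))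

/-- The relation `λ A = {(x, λ y) : (x,y) ∈ A}`. -/
def smulRel (lam : ℂ) (A : LinRel H) : LinRel H :=
  A.map ((LinearMap.fst ℂ H H).prod (lam • LinearMap.snd ℂ H H))

/-- The inverse relation `A⁻¹ = {(y,x) : (x,y) ∈ A}`. -/
def inv (A : LinRel H) : LinRel H :=
  A.map ((LinearMap.snd ℂ H H).prod (LinearMap.fst ℂ H H))

/-- The product (composition) `A B = {(x,y) : ∃ z, (x,z) ∈ B ∧ (z,y) ∈ A}`. -/
def comp (A B : LinRel H) : LinRel H where
  carrier := {p | ∃ z, (p.1, z) ∈ B ∧ (z, p.2) ∈ A}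
  zero_mem' := ⟨0, B.zero_mem, A.zero_mem⟩
  add_mem' := by
    rintro p q ⟨z1, h1, h2⟩ ⟨z2, h3, h4⟩
    exact ⟨z1 + z2, B.add_mem h1 h3, A.add_mem h2 h4⟩
  smul_mem' := by
    rintro c p ⟨z, h1, h2⟩
    exact ⟨c • z, B.smul_mem c h1, A.smul_mem c h2⟩

/-- The identity relation `I = {(x,x) : x ∈ H}`. -/
def idRel : LinRel H := LinearMap.graph (LinearMap.id : H →ₗ[ℂ] H)

/-- Powers: `A⁰ = I` and `Aᵏ = A · Aᵏ⁻¹`. -/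
def pow (A : LinRel H) : ℕ → LinRel H
  | 0 => idRel
  | (k+1) => comp A (pow A k)

/-- The kernel `ker A = {x : (x,0) ∈ A}`. -/
def ker (A : LinRel H) : Submodule ℂ H := A.comap (LinearMap.inl ℂ H H)

/-- The multivalued part `mul A = {y : (0,y) ∈ A}`. -/
def mul (A : LinRel H) : Submodule ℂ H := A.comap (LinearMap.inr ℂ H H)

lemma mem_ker {A : LinRel H} {x : H} : x ∈ ker A ↔ (x, (0:H)) ∈ A := by
  simp [ker, Submodule.mem_comap]

lemma mem_mul {A : LinRel H} {y : H} : y ∈ mul A ↔ ((0:H), y) ∈ A := by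
  simp [mul, Submodule.mem_comap]

lemma ker_pow_le_succ (A : LinRel H) (i : ℕ) : ker (pow A i) ≤ ker (pow A (i+1)) := by
  intro x hx
  rw [mem_ker] at hx ⊢
  exact ⟨0, hx, A.zero_mem⟩

lemma ker_pow_mono (A : LinRel H) : Monotone fun i => ker (pow A i) :=
  monotone_nat_of_le_succ (ker_pow_le_succ A)

lemma mul_pow_le_succ (A : LinRel H) : ∀ i, mul (pow A i) ≤ mul (pow A (i+1)) := by
  intro i
  induction i with
  | zero =>
    intro y hy
    rw [mem_mul] at hy ⊢
    have : y = 0 := by simpa [pow, idRel, LinearMap.mem_graph_iff] using hy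
    subst this
    exact Submodule.zero_mem _
  | succ i ih =>
    intro y hy
    rw [mem_mul] at hy ⊢
    obtain ⟨w, hw, hwy⟩ := hy
    exact ⟨w, mem_mul.mp (ih (mem_mul.mpr hw)), hwy⟩

lemma mul_pow_mono (A : LinRel H) : Monotone fun i => mul (pow A i) :=
  monotone_nat_of_le_succ (mul_pow_le_succ A)

/-- The root space `R_λ(A) = ⋃_{i ≥ 1} ker (A - λ)ⁱ`. -/
def rootSpace (A : LinRel H) (lam : ℂ) : Submodule ℂ H where
  carrier := ⋃ i : ℕ, (ker (pow (shift A lam) (i+1)) : Set H)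
  zero_mem' := Set.mem_iUnion.2 ⟨0, Submodule.zero_mem _⟩
  add_mem' := by
    intro a b ha hb
    obtain ⟨i, hi⟩ := Set.mem_iUnion.1 ha
    obtain ⟨j, hj⟩ := Set.mem_iUnion.1 hb
    exact Set.mem_iUnion.2 ⟨max i j, Submodule.add_mem _
      (ker_pow_mono _ (by omega : i + 1 ≤ max i j + 1) hi)
      (ker_pow_mono _ (by omega : j + 1 ≤ max i j + 1) hj)⟩
  smul_mem' := by
    intro c a ha
    obtain ⟨i, hi⟩ := Set.mem_iUnion.1 ha
    exact Set.mem_iUnion.2 ⟨i, Submodule.smul_mem _ c hi⟩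

/-- The root space at infinity `R_∞(A) = ⋃_{i ≥ 1} mul Aⁱ`. -/
def rootInf (A : LinRel H) : Submodule ℂ H where
  carrier := ⋃ i : ℕ, (mul (pow A (i+1)) : Set H)
  zero_mem' := Set.mem_iUnion.2 ⟨0, Submodule.zero_mem _⟩
  add_mem' := by
    intro a b ha hb
    obtain ⟨i, hi⟩ := Set.mem_iUnion.1 ha
    obtain ⟨j, hj⟩ := Set.mem_iUnion.1 hb
    exact Set.mem_iUnion.2 ⟨max i j, Submodule.add_mem _
      (mul_pow_mono _ (by omega : i + 1 ≤ max i j + 1) hi)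
      (mul_pow_mono _ (by omega : j + 1 ≤ max i j + 1) hj)⟩
  smul_mem' := by
    intro c a ha
    obtain ⟨i, hi⟩ := Set.mem_iUnion.1 ha
    exact Set.mem_iUnion.2 ⟨i, Submodule.smul_mem _ c hi⟩

/-- The singular chain space `R_c(A) = R_0(A) ∩ R_∞(A)`. -/
def singChain (A : LinRel H) : Submodule ℂ H := rootSpace A 0 ⊓ rootInf A

/-- The root space at a point of `ℂ ∪ {∞}` (modelled as `Option ℂ`, with `none = ∞`). -/
def rootSpaceE (A : LinRel H) : Option ℂ → Submodule ℂ H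
  | none => rootInf A
  | some lam => rootSpace A lam

/-- `λ ∈ ℂ ∪ {∞}` is an eigenvalue of `A`. -/
def isEigenvalue (A : LinRel H) : Option ℂ → Prop
  | none => mul A ≠ ⊥
  | some lam => ker (shift A lam) ≠ ⊥

end LinRel
namespace LinRel

open Polynomial

/-! ### Polynomial solutions of the pencil equation -/

/-- The equation `(b - t a) e = p x` for an `A`-valued polynomial `e` of degree less than `n`,
where `a, b` are the coordinate maps of `A` and `deg p ≤ n` is intended. Only the first coordinates
of `e` are recorded: `w (i + 1)` is `-a` of the `i`-th coefficient, and `w 0 = 0`. The second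
coordinate of that coefficient is then forced by the equation, and the last condition says that
the coefficients of index at least `n` vanish. -/
def Divides (A : LinRel H) (n : ℕ) (p : ℂ[X]) (x : H) : Prop :=
  ∃ w : ℕ → H, w 0 = 0 ∧ (∀ i, (w (i + 1), w i - p.coeff i • x) ∈ A) ∧
    ∀ i, n ≤ i → w i = p.coeff i • x

lemma mem_congr {A : LinRel H} {a b a' b' : H} (h : (a, b) ∈ A) (ha : a' = a) (hb : b' = b) :
    (a', b') ∈ A := by
  subst ha hb; exact h

lemma zero_pair_mem (A : LinRel H) : ((0 : H), (0 : H)) ∈ A := A.zero_mem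

lemma Divides.zero (A : LinRel H) (n : ℕ) (x : H) : Divides A n 0 x :=
  ⟨fun _ => 0, rfl, fun i => mem_congr (zero_pair_mem A) rfl (by simp), fun i _ => by simp⟩

lemma Divides.zero_vec (A : LinRel H) (n : ℕ) (p : ℂ[X]) : Divides A n p 0 :=
  ⟨fun _ => 0, rfl, fun i => mem_congr (zero_pair_mem A) rfl (by simp), fun i _ => by simp⟩

lemma Divides.mono {A : LinRel H} {n m : ℕ} {p : ℂ[X]} {x : H} (h : Divides A n p x)
    (hnm : n ≤ m) : Divides A m p x := by
  obtain ⟨w, h0, h1, h2⟩ := h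
  exact ⟨w, h0, h1, fun i hi => h2 i (hnm.trans hi)⟩

lemma Divides.add {A : LinRel H} {n : ℕ} {p q : ℂ[X]} {x : H} (hp : Divides A n p x)
    (hq : Divides A n q x) : Divides A n (p + q) x := by
  obtain ⟨w, h0, h1, h2⟩ := hp
  obtain ⟨v, k0, k1, k2⟩ := hq
  refine ⟨fun i => w i + v i, by simp [h0, k0], fun i => ?_, fun i hi => ?_⟩
  · refine mem_congr (A.add_mem (h1 i) (k1 i)) rfl ?_
    simp only [coeff_add]; module
  · simp only [h2 i hi, k2 i hi, coeff_add]; module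

lemma Divides.add_vec {A : LinRel H} {n : ℕ} {p : ℂ[X]} {x y : H} (hx : Divides A n p x)
    (hy : Divides A n p y) : Divides A n p (x + y) := by
  obtain ⟨w, h0, h1, h2⟩ := hx
  obtain ⟨v, k0, k1, k2⟩ := hy
  refine ⟨fun i => w i + v i, by simp [h0, k0], fun i => ?_, fun i hi => ?_⟩
  · refine mem_congr (A.add_mem (h1 i) (k1 i)) rfl ?_
    dsimp only; module
  · simp only [h2 i hi, k2 i hi]; module

lemma Divides.C_mul {A : LinRel H} {n : ℕ} {p : ℂ[X]} {x : H} (hp : Divides A n p x) (c : ℂ) :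
    Divides A n (C c * p) x := by
  obtain ⟨w, h0, h1, h2⟩ := hp
  refine ⟨fun i => c • w i, by simp [h0], fun i => ?_, fun i hi => ?_⟩
  · refine mem_congr (A.smul_mem c (h1 i)) rfl ?_
    simp only [coeff_C_mul]; module
  · simp only [h2 i hi, coeff_C_mul]; module

lemma Divides.X_mul {A : LinRel H} {n : ℕ} {p : ℂ[X]} {x : H} (hp : Divides A n p x) :
    Divides A (n + 1) (X * p) x := by
  obtain ⟨w, h0, h1, h2⟩ := hp
  refine ⟨fun i => w (i - 1), by simp [h0], fun i => ?_, fun i hi => ?_⟩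
  · rcases i with _ | i
    · exact mem_congr (zero_pair_mem A) h0 (by simp [h0])
    · simpa [coeff_X_mul] using h1 i
  · obtain ⟨i, rfl⟩ : ∃ j, i = j + 1 := ⟨i - 1, by omega⟩
    simpa [coeff_X_mul] using h2 i (by omega)

lemma Divides.X_pow_mul {A : LinRel H} {n : ℕ} {p : ℂ[X]} {x : H} (hp : Divides A n p x) (k : ℕ) :
    Divides A (n + k) (X ^ k * p) x := by
  induction k with
  | zero => simpa using hp
  | succ k ih =>
    have := ih.X_mul
    rwa [← mul_assoc, ← pow_succ', add_assoc] at this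

lemma Divides.poly_mul {A : LinRel H} {n m : ℕ} {p q : ℂ[X]} {x : H} (hp : Divides A n p x)
    (hq : q.natDegree ≤ m) : Divides A (n + m) (q * p) x := by
  refine induction_with_natDegree_le (fun q => Divides A (n + m) (q * p) x) m ?_ ?_ ?_ q hq
  · simpa using Divides.zero A (n + m) x
  · intro k c _ hk
    rw [mul_assoc]
    exact ((hp.X_pow_mul k).mono (by omega)).C_mul c
  · intro f g _ _ hf hg
    rw [add_mul]
    exact hf.add hg

/-! ### Bézout's identity for forms -/

/-- A homogeneous Bézout argument, for a pair in which `p` has no zero at infinity: writing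
`r = α p + β q` with `deg β ≤ n` forces `deg α ≤ m`. -/
lemma divides_of_isCoprime {A : LinRel H} {n m : ℕ} {p q : ℂ[X]} {x : H}
    (hp : Divides A n p x) (hq : Divides A m q x) (hpn : p.natDegree = n)
    (hp0 : p ≠ 0) (hqm : q.natDegree ≤ m) (hpq : IsCoprime p q) {r : ℂ[X]}
    (hr : r.natDegree ≤ n + m) : Divides A (n + m) r x := by
  obtain ⟨a, b, hab⟩ := hpq
  -- reduce the coefficient of `q` modulo `p`
  set β := (r * b) % p with hβ
  set α := r * a + (r * b) / p * q with hα
  have hdiv : p * ((r * b) / p) + β = r * b := EuclideanDomain.div_add_mod _ _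
  have hr' : r = α * p + β * q := by
    linear_combination (-r) * hab - q * hdiv
  have hβn : β.natDegree ≤ n := hpn ▸ natDegree_le_natDegree (EuclideanDomain.mod_lt _ hp0).le
  have hαm : α.natDegree ≤ m := by
    by_cases hα0 : α = 0
    · simp [hα0]
    have h1 : (α * p).natDegree ≤ n + m := by
      have : α * p = r - β * q := by linear_combination -hr'
      rw [this]
      exact (natDegree_sub_le _ _).trans
        (max_le hr (natDegree_mul_le.trans (by omega)))
    rw [natDegree_mul hα0 hp0] at h1
    omega
  rw [hr']
  refine (hp.poly_mul hαm).add ?_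
  rw [add_comm]
  exact hq.poly_mul hβn

/-- The homogeneous Bézout argument for two polynomials of formal degrees `n`, `m` without a common
zero on the projective line. -/
lemma divides_of_coprime {A : LinRel H} {n m : ℕ} {p q : ℂ[X]} {x : H}
    (hp : Divides A n p x) (hq : Divides A m q x) (hp0 : p ≠ 0) (hq0 : q ≠ 0)
    (hpn : p.natDegree ≤ n) (hqm : q.natDegree ≤ m)
    (hinf : p.natDegree = n ∨ q.natDegree = m) (hpq : IsCoprime p q) {r : ℂ[X]}
    (hr : r.natDegree ≤ n + m) : Divides A (n + m) r x := by
  rcases hinf with h | h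
  · exact divides_of_isCoprime hp hq h hp0 hqm hpq hr
  · rw [add_comm] at hr ⊢
    exact divides_of_isCoprime hq hp h hq0 hpn hpq.symm hr

/-! ### Root spaces in terms of the pencil equation -/

lemma mem_shift {A : LinRel H} {lam : ℂ} {x y : H} :
    (x, y) ∈ shift A lam ↔ (x, y + lam • x) ∈ A := by
  simp only [shift, Submodule.mem_map, LinearMap.prod_apply, Function.prod_apply, Prod.exists,
    LinearMap.fst_apply, LinearMap.sub_apply, LinearMap.snd_apply, LinearMap.smul_apply,
    Prod.mk.injEq]
  constructor
  · rintro ⟨a, b, h, rfl, rfl⟩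
    simpa using h
  · intro h
    exact ⟨x, y + lam • x, h, rfl, by simp⟩

/-- Prolonging a chain at `λ` multiplies by `t - λ`: if `(b - t a) e = p y` then
`(b - t a) (p (x, y + λ x) - e) = -(t - λ) p x`. -/
lemma Divides.cons {A : LinRel H} {lam : ℂ} {n : ℕ} {p : ℂ[X]} {x y : H}
    (hxy : (x, y + lam • x) ∈ A) (hy : Divides A n p y) (hpn : p.natDegree ≤ n) :
    Divides A (n + 1) ((X - C lam) * p) x := by
  obtain ⟨w, h0, h1, h2⟩ := hy
  refine ⟨fun i => w i + (X * p).coeff i • x, by simp [h0], fun i => ?_, fun i hi => ?_⟩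
  · refine mem_congr (A.add_mem (h1 i) (A.smul_mem (p.coeff i) hxy)) ?_ ?_
    · simp [coeff_X_mul]
    · simp only [sub_mul, coeff_sub, coeff_C_mul, Prod.smul_snd]; module
  · have : p.coeff i = 0 := coeff_eq_zero_of_natDegree_lt (by omega)
    simp [h2 i (by omega), sub_mul, this]

/-- The converse of `Divides.cons`: the leading coefficient of `e` in
`(b - t a) e = (t - λ) p x` is the pair `-(x, y + λ x)` that begins the chain. -/
lemma Divides.uncons {A : LinRel H} {lam : ℂ} {n : ℕ} {p : ℂ[X]} {x : H}
    (h : Divides A (n + 1) ((X - C lam) * p) x) (hp : p.Monic) (hpn : p.natDegree = n) :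
    ∃ y, (x, y + lam • x) ∈ A ∧ Divides A n p y := by
  obtain ⟨w, h0, h1, h2⟩ := h
  have hlead : p.coeff n = 1 := hpn ▸ hp
  have hhi : ∀ i, n < i → p.coeff i = 0 := fun i hi =>
    coeff_eq_zero_of_natDegree_lt (by omega)
  have hq : ∀ i, ((X - C lam) * p).coeff i = (X * p).coeff i - lam * p.coeff i := fun i => by
    simp [sub_mul]
  simp only [hq] at h1 h2
  have hxy : (x, (w n - (X * p).coeff n • x) + lam • x) ∈ A := by
    refine mem_congr (h1 n) ?_ ?_
    · rw [h2 (n + 1) le_rfl, coeff_X_mul, hlead, hhi (n + 1) (by omega)]; simp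
    · rw [hlead]; module
  refine ⟨w n - (X * p).coeff n • x, hxy,
    fun i => w i - (X * p).coeff i • x, by simp [h0], fun i => ?_, fun i hi => ?_⟩
  · refine mem_congr (A.sub_mem (h1 i) (A.smul_mem (p.coeff i) hxy)) ?_ ?_
    · simp [coeff_X_mul]
    · simp only [Prod.smul_snd]; module
  · rcases hi.eq_or_lt with rfl | hi
    · simp [hlead]
    · simp [h2 i hi, hhi i hi]

/-- Powers may also be unfolded at their first step. -/
lemma mem_pow_succ_iff {B : LinRel H} {k : ℕ} {x y : H} :
    (x, y) ∈ pow B (k + 1) ↔ ∃ z, (x, z) ∈ B ∧ (z, y) ∈ pow B k := by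
  induction k generalizing y with
  | zero =>
    have hid : ∀ a b : H, (a, b) ∈ pow B 0 ↔ b = a := fun a b => by
      simp [pow, idRel, LinearMap.mem_graph_iff]
    constructor
    · rintro ⟨z, hz, hzy⟩
      obtain rfl := (hid _ _).1 hz
      exact ⟨y, hzy, (hid _ _).2 rfl⟩
    · rintro ⟨z, hz, hzy⟩
      obtain rfl := (hid _ _).1 hzy
      exact ⟨x, (hid _ _).2 rfl, hz⟩
  | succ k ih =>
    constructor
    · rintro ⟨z, hz, hzy⟩
      obtain ⟨u, hu, huz⟩ := ih.1 hz
      exact ⟨u, hu, z, huz, hzy⟩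
    · rintro ⟨u, hu, z, huz, hzy⟩
      exact ⟨z, ih.2 ⟨u, hu, huz⟩, hzy⟩

lemma divides_zero_iff {A : LinRel H} {p : ℂ[X]} {x : H} (hp : p.coeff 0 = 1) :
    Divides A 0 p x ↔ x = 0 := by
  constructor
  · rintro ⟨w, h0, -, h2⟩
    simpa [h0, hp, eq_comm] using h2 0 le_rfl
  · rintro rfl
    exact Divides.zero_vec A 0 p

lemma mem_ker_pow_iff {A : LinRel H} {lam : ℂ} {n : ℕ} {x : H} :
    x ∈ ker (pow (shift A lam) n) ↔ Divides A n ((X - C lam) ^ n) x := by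
  induction n generalizing x with
  | zero =>
    rw [divides_zero_iff (by simp), mem_ker]
    simp [pow, idRel, LinearMap.mem_graph_iff, eq_comm]
  | succ n ih =>
    have hdeg : ((X - C lam) ^ n).natDegree = n := by simp
    rw [mem_ker, mem_pow_succ_iff, pow_succ']
    simp only [mem_shift, ← mem_ker, ih]
    constructor
    · rintro ⟨y, hxy, hy⟩
      exact hy.cons hxy hdeg.le
    · intro h
      exact h.uncons ((monic_X_sub_C lam).pow n) hdeg

lemma mem_mul_pow_iff {A : LinRel H} {n : ℕ} {x : H} :
    x ∈ mul (pow A n) ↔ Divides A n 1 x := by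
  induction n generalizing x with
  | zero =>
    rw [divides_zero_iff (by simp), mem_mul]
    simp [pow, idRel, LinearMap.mem_graph_iff]
  | succ n ih =>
    have hstep : x ∈ mul (pow A (n + 1)) ↔ ∃ z, z ∈ mul (pow A n) ∧ (z, x) ∈ A := by
      simp only [mem_mul]; rfl
    rw [hstep]
    simp only [ih]
    constructor
    · -- if `(b - t a) e = z` then `(b - t a) (t e + (z, x)) = x`
      rintro ⟨z, ⟨w, h0, h1, h2⟩, hzx⟩
      refine ⟨fun i => w (i - 1) - (X : ℂ[X]).coeff i • z, by simp [h0],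
        fun i => ?_, fun i hi => ?_⟩
      · rcases i with _ | _ | i
        · refine mem_congr (A.neg_mem hzx) ?_ ?_ <;> simp [h0]
        · simpa [coeff_X, coeff_one, h0] using h1 0
        · simpa [coeff_X, coeff_one] using h1 (i + 1)
      · obtain ⟨i, rfl⟩ : ∃ j, i = j + 1 := ⟨i - 1, by omega⟩
        have := h2 i (by omega)
        rcases i with _ | i <;> simp [this, coeff_X, coeff_one]
    · -- the constant coefficient of `e` is `(z, x)`
      rintro ⟨w, h0, h1, h2⟩
      have hzx : (-w 1, x) ∈ A := mem_congr (A.neg_mem (h1 0)) rfl (by simp [h0])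
      refine ⟨-w 1, ⟨fun i => w (i + 1) - (1 : ℂ[X]).coeff i • w 1, by simp,
        fun i => ?_, fun i hi => ?_⟩, hzx⟩
      · refine mem_congr (h1 (i + 1)) ?_ ?_ <;> simp [coeff_one]
      · simp [h2 (i + 1) (by omega), coeff_one]

lemma mem_rootSpace_iff {A : LinRel H} {lam : ℂ} {x : H} :
    x ∈ rootSpace A lam ↔ ∃ n, Divides A n ((X - C lam) ^ n) x := by
  simp only [← mem_ker_pow_iff]
  refine Set.mem_iUnion.trans ⟨fun ⟨i, hi⟩ => ⟨i + 1, hi⟩, fun ⟨i, hi⟩ => ⟨i, ?_⟩⟩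
  exact ker_pow_le_succ _ i hi

lemma mem_rootInf_iff {A : LinRel H} {x : H} :
    x ∈ rootInf A ↔ ∃ n, Divides A n 1 x := by
  simp only [← mem_mul_pow_iff]
  refine Set.mem_iUnion.trans ⟨fun ⟨i, hi⟩ => ⟨i + 1, hi⟩, fun ⟨i, hi⟩ => ⟨i, ?_⟩⟩
  exact mul_pow_le_succ _ i hi

/-! ### Sums of root spaces -/

lemma mem_rootSpaceE_of_forall {A : LinRel H} {N : ℕ} {x : H}
    (h : ∀ r : ℂ[X], r.natDegree ≤ N → Divides A N r x) (nu : Option ℂ) :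
    x ∈ rootSpaceE A nu := by
  cases nu with
  | none => exact mem_rootInf_iff.2 ⟨N, h 1 (by simp)⟩
  | some lam => exact mem_rootSpace_iff.2 ⟨N, h _ (by simp)⟩

/-- A vector in a sum of root spaces satisfies `(b - t a) e = p x` with a form `p` whose zeros, at
infinity included, lie among the given points. -/
lemma exists_divides_of_mem_iSup {A : LinRel H} {ι : Type*} (lam : ι → Option ℂ) {x : H}
    (hx : x ∈ ⨆ i, rootSpaceE A (lam i)) :
    ∃ (n : ℕ) (p : ℂ[X]), Divides A n p x ∧ p ≠ 0 ∧ p.natDegree ≤ n ∧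
      (p.natDegree = n ∨ ∃ i, lam i = none) ∧
      ∀ a, p.eval a = 0 → ∃ i, lam i = some a := by
  refine Submodule.iSup_induction _ (motive := fun x => ∃ (n : ℕ) (p : ℂ[X]), Divides A n p x ∧
    p ≠ 0 ∧ p.natDegree ≤ n ∧ (p.natDegree = n ∨ ∃ i, lam i = none) ∧
      ∀ a, p.eval a = 0 → ∃ i, lam i = some a) hx ?_ ?_ ?_
  · intro i x hx
    rcases hi : lam i with _ | c
    · rw [hi] at hx
      obtain ⟨n, hn⟩ := mem_rootInf_iff.1 hx
      exact ⟨n, 1, hn, one_ne_zero, by simp, Or.inr ⟨i, hi⟩, by simp⟩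
    · rw [hi] at hx
      obtain ⟨n, hn⟩ := mem_rootSpace_iff.1 hx
      refine ⟨n, _, hn, ((monic_X_sub_C c).pow n).ne_zero, by simp, Or.inl (by simp), ?_⟩
      intro a ha
      rw [eval_pow] at ha
      have := eq_zero_of_pow_eq_zero ha
      simp only [eval_sub, eval_X, eval_C, sub_eq_zero] at this
      exact ⟨i, by rw [hi, this]⟩
  · exact ⟨0, 1, Divides.zero_vec A 0 1, one_ne_zero, by simp, Or.inl (by simp), by simp⟩
  · rintro x y ⟨n, p, hp, hp0, hpn, hpi, hpr⟩ ⟨m, q, hq, hq0, hqm, hqi, hqr⟩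
    have hdeg := natDegree_mul hp0 hq0
    refine ⟨n + m, p * q, Divides.add_vec ?_ ?_, mul_ne_zero hp0 hq0, by omega, ?_, ?_⟩
    · rw [mul_comm]
      exact hp.poly_mul hqm
    · rw [add_comm]
      exact hq.poly_mul hpn
    · rcases hpi with hpi | hpi
      · rcases hqi with hqi | hqi
        · exact Or.inl (by omega)
        · exact Or.inr hqi
      · exact Or.inr hpi
    · intro a ha
      rw [eval_mul, mul_eq_zero] at ha
      exact ha.elim (hpr a) (hqr a)

/-- A vector in two sums of root spaces over disjoint families of points
lies in the root space at every point. -/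
lemma mem_rootSpaceE_of_disjoint {A : LinRel H} {ι κ : Type*} {lam : ι → Option ℂ}
    {mu : κ → Option ℂ} (hdisj : ∀ i j, lam i ≠ mu j) {x : H}
    (hx : x ∈ ⨆ i, rootSpaceE A (lam i)) (hx' : x ∈ ⨆ j, rootSpaceE A (mu j))
    (nu : Option ℂ) : x ∈ rootSpaceE A nu := by
  obtain ⟨n, p, hp, hp0, hpn, hpi, hpr⟩ := exists_divides_of_mem_iSup lam hx
  obtain ⟨m, q, hq, hq0, hqm, hqi, hqr⟩ := exists_divides_of_mem_iSup mu hx'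
  have hinf : p.natDegree = n ∨ q.natDegree = m := by
    rcases hpi with h | ⟨i, hi⟩
    · exact Or.inl h
    rcases hqi with h | ⟨j, hj⟩
    · exact Or.inr h
    exact absurd (hi.trans hj.symm) (hdisj i j)
  have hcop : IsCoprime p q := by
    rw [isCoprime_iff_aeval_ne_zero_of_isAlgClosed ℂ ℂ]
    intro a
    by_contra! h
    simp only [coe_aeval_eq_eval] at h
    obtain ⟨i, hi⟩ := hpr a h.1
    obtain ⟨j, hj⟩ := hqr a h.2
    exact hdisj i j (hi.trans hj.symm)
  exact mem_rootSpaceE_of_forall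
    (fun r hr => divides_of_coprime hp hq hp0 hq0 hpn hqm hinf hcop hr) nu

end LinRel
/-- for disjoint subsets `{λ_1, …, λ_l}` and `{μ_1, …, μ_m}` of
`ℂ ∪ {∞}` (modelled as `Option ℂ`), one has
`R_c(A) = (Σ_i R_{λ_i}(A)) ∩ (Σ_j R_{μ_j}(A))`. -/
theorem statement_14 (A : LinRel H) (l m : ℕ) (hl : 0 < l) (hm : 0 < m)
    (lam : Fin l → Option ℂ) (mu : Fin m → Option ℂ)
    (hdisj : ∀ i j, lam i ≠ mu j) :
    LinRel.singChain A =
      (⨆ i, LinRel.rootSpaceE A (lam i)) ⊓ (⨆ j, LinRel.rootSpaceE A (mu j)) := by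
  apply le_antisymm
  · rintro x ⟨h0, hinf⟩
    have hall : ∀ nu, x ∈ LinRel.rootSpaceE A nu :=
      LinRel.mem_rootSpaceE_of_disjoint (lam := fun _ : Unit => some 0)
        (mu := fun _ : Unit => none) (by simp)
        (Submodule.mem_iSup_of_mem () h0) (Submodule.mem_iSup_of_mem () hinf)
    exact ⟨Submodule.mem_iSup_of_mem ⟨0, hl⟩ (hall _),
      Submodule.mem_iSup_of_mem ⟨0, hm⟩ (hall _)⟩
  · rintro x ⟨h1, h2⟩
    have hall := LinRel.mem_rootSpaceE_of_disjoint hdisj h1 h2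
    exact ⟨hall (some 0), hall none⟩
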